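/- arXiv:1801.10072 — 2 statements merged into one kernel-verified Lean document; each statement's English description precedes it below -/
import Mathlib

section
/- Sail vertices of an angle between two lines in normal position: let α > 1 and −1 < β < 0 be irrational real numbers, with continued fraction expansions α = [a₀; a₁, a₂, …] (convergents pₖ/qₖ) and −β = [0; b₁, b₂, …] (convergents p̃ₖ/q̃ₖ). Then the set of extreme points of the convex hull of the set S = {(x, y) ∈ ℤ² : x > 0, βx < y < αx} is exactly {(q₂ₖ, p₂ₖ) : k ≥ 0} ∪ {(q̃₂ₖ, −p̃₂ₖ) : k ≥ 0} (note (q̃₀, −p̃₀) = (1, 0)). -/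
/-- `a` is the sequence of partial quotients of the (regular) continued fraction expansion
`ξ = [a₀; a₁, a₂, …]`. -/
def IsCFExpansion (ξ : ℝ) (a : ℕ → ℤ) : Prop :=
  ∃ w : ℕ → ℝ, w 0 = ξ ∧ ∀ n, a n = ⌊w n⌋ ∧ w (n + 1) = 1 / (w n - (a n : ℝ))

/-- `p k / q k` are the convergents of the continued fraction with partial quotients `a`. -/
def IsConvergents (a : ℕ → ℤ) (p q : ℕ → ℤ) : Prop :=
  p 0 = a 0 ∧ q 0 = 1 ∧ p 1 = a 1 * a 0 + 1 ∧ q 1 = a 1 ∧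
    ∀ k : ℕ, p (k + 2) = a (k + 2) * p (k + 1) + p k ∧
      q (k + 2) = a (k + 2) * q (k + 1) + q k

/-- Bookkeeping: vertices `(X k, Y k)` and edge directions `(P k, Q k)` of the sail below slope `ξ`. -/
structure SailData (ξ : ℝ) (X Y P Q A B : ℕ → ℤ) : Prop where
  X0 : X 0 = 1
  Y0 : Y 0 = 0
  P0 : P 0 = 0
  Q0 : Q 0 = 1
  hX : ∀ k, X (k + 1) = X k + A k * P k
  hY : ∀ k, Y (k + 1) = Y k + A k * Q k
  hP : ∀ k, P (k + 1) = P k + B k * X (k + 1)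
  hQ : ∀ k, Q (k + 1) = Q k + B k * Y (k + 1)
  A0 : ∀ k, 0 ≤ A k
  A1 : ∀ k, 1 ≤ A (k + 1)
  B1 : ∀ k, 1 ≤ B k
  low : ∀ k, (Y k : ℝ) < ξ * X k
  up : ∀ k, ξ * P k < (Q k : ℝ)

theorem sailData_of_cf (ξ : ℝ) (hξ : 0 < ξ) (hirr : Irrational ξ) (a p q : ℕ → ℤ)
    (hcf : IsCFExpansion ξ a) (hc : IsConvergents a p q) :
    ∃ X Y P Q A B : ℕ → ℤ, SailData ξ X Y P Q A B ∧
      (∀ k, X (k + 1) = q (2 * k)) ∧ ∀ k, Y (k + 1) = p (2 * k) := by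
  obtain ⟨w, hw0, hw⟩ := hcf
  obtain ⟨hp0, hq0, hp1, hq1, hrec⟩ := hc
  have hirrw : ∀ n, Irrational (w n) := by
    intro n
    induction n with
    | zero => rw [hw0]; exact hirr
    | succ n ih =>
      rw [(hw n).2, one_div]
      exact (ih.sub_intCast _).inv
  have hfr : ∀ n, 0 < w n - a n ∧ w n - a n < 1 := by
    intro n
    rw [(hw n).1]
    have h1 := Int.floor_le (w n)
    have h2 := Int.lt_floor_add_one (w n)
    have h3 := (hirrw n).ne_int ⌊w n⌋
    refine ⟨sub_pos.2 (lt_of_le_of_ne h1 h3.symm), by linarith⟩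
  have hw1 : ∀ n, 1 < w (n + 1) := by
    intro n
    rw [(hw n).2]
    exact (one_lt_div (hfr n).1).2 (hfr n).2
  have ha1 : ∀ n, 1 ≤ a (n + 1) := by
    intro n
    rw [(hw (n + 1)).1]
    apply Int.le_floor.2
    push_cast
    exact (hw1 n).le
  have ha0 : ∀ n, 0 ≤ a n := by
    intro n
    cases n with
    | zero =>
      rw [(hw 0).1, hw0]
      exact Int.floor_nonneg.2 hξ.le
    | succ n => linarith [ha1 n]
  obtain ⟨X, X0, XS⟩ : ∃ X : ℕ → ℤ, X 0 = 1 ∧ ∀ j, X (j + 1) = q (2 * j) :=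
    ⟨fun k => Nat.casesOn k 1 (fun j => q (2 * j)), rfl, fun _ => rfl⟩
  obtain ⟨Y, Y0, YS⟩ : ∃ Y : ℕ → ℤ, Y 0 = 0 ∧ ∀ j, Y (j + 1) = p (2 * j) :=
    ⟨fun k => Nat.casesOn k 0 (fun j => p (2 * j)), rfl, fun _ => rfl⟩
  obtain ⟨P, P0, PS⟩ : ∃ P : ℕ → ℤ, P 0 = 0 ∧ ∀ j, P (j + 1) = q (2 * j + 1) :=
    ⟨fun k => Nat.casesOn k 0 (fun j => q (2 * j + 1)), rfl, fun _ => rfl⟩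
  obtain ⟨Q, Q0, QS⟩ : ∃ Q : ℕ → ℤ, Q 0 = 1 ∧ ∀ j, Q (j + 1) = p (2 * j + 1) :=
    ⟨fun k => Nat.casesOn k 1 (fun j => p (2 * j + 1)), rfl, fun _ => rfl⟩
  have hX : ∀ k, X (k + 1) = X k + a (2 * k) * P k := by
    intro k
    cases k with
    | zero => simp [X0, P0, XS, hq0]
    | succ k =>
      rw [XS, XS, PS]
      change q (2 * k + 2) = q (2 * k) + a (2 * k + 2) * q (2 * k + 1)
      rw [(hrec _).2]; ring
  have hY : ∀ k, Y (k + 1) = Y k + a (2 * k) * Q k := by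
    intro k
    cases k with
    | zero => simp [Y0, Q0, YS, hp0]
    | succ k =>
      rw [YS, YS, QS]
      change p (2 * k + 2) = p (2 * k) + a (2 * k + 2) * p (2 * k + 1)
      rw [(hrec _).1]; ring
  have hP : ∀ k, P (k + 1) = P k + a (2 * k + 1) * X (k + 1) := by
    intro k
    cases k with
    | zero => simp [P0, PS, XS, hq0, hq1]
    | succ k =>
      rw [PS, PS, XS]
      change q (2 * k + 1 + 2) = q (2 * k + 1) + a (2 * k + 1 + 2) * q (2 * k + 1 + 1)
      rw [(hrec _).2]; ring
  have hQ : ∀ k, Q (k + 1) = Q k + a (2 * k + 1) * Y (k + 1) := by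
    intro k
    cases k with
    | zero => simp [Q0, QS, YS, hp0, hp1]; ring
    | succ k =>
      rw [QS, QS, YS]
      change p (2 * k + 1 + 2) = p (2 * k + 1) + a (2 * k + 1 + 2) * p (2 * k + 1 + 1)
      rw [(hrec _).1]; ring
  have hstep : ∀ n (e f : ℝ), e = w n * f → f = w (n + 1) * (e - a n * f) := by
    intro n e f h
    have := (hfr n).1.ne'
    rw [(hw n).2, h]
    field_simp
  have key : ∀ k : ℕ, 0 < (Q k : ℝ) - ξ * (P k : ℝ) ∧
      ξ * (X k : ℝ) - (Y k : ℝ) = w (2 * k) * ((Q k : ℝ) - ξ * (P k : ℝ)) := by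
    intro k
    induction k with
    | zero => simp [X0, Y0, P0, Q0, hw0]
    | succ k ih =>
      obtain ⟨h1, h2⟩ := ih
      have h3 := hstep _ _ _ h2
      have e1 : ξ * X (k + 1) - Y (k + 1)
          = ξ * (X k : ℝ) - (Y k : ℝ) - a (2 * k) * ((Q k : ℝ) - ξ * (P k : ℝ)) := by
        rw [hX, hY]; push_cast; ring
      have e2 : (Q (k + 1) : ℝ) - ξ * P (k + 1)
          = (Q k : ℝ) - ξ * (P k : ℝ) - a (2 * k + 1) * (ξ * X (k + 1) - Y (k + 1)) := by
        rw [hP, hQ]; push_cast; ring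
      rw [← e1] at h3
      have h4 := hstep _ _ _ h3
      rw [← e2] at h4
      refine ⟨?_, h4⟩
      have h5 : 0 < ξ * X (k + 1) - Y (k + 1) := by
        rw [e1, h2, ← sub_mul]
        exact mul_pos (hfr _).1 h1
      rw [e2, h3, ← sub_mul]
      exact mul_pos (hfr _).1 h5
  refine ⟨X, Y, P, Q, fun k => a (2 * k), fun k => a (2 * k + 1),
    ⟨X0, Y0, P0, Q0, hX, hY, hP, hQ, fun k => ha0 _, fun k => ha1 _, fun k => ha1 _, ?_, ?_⟩,
    XS, YS⟩
  · intro k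
    obtain ⟨h1, h2⟩ := key k
    have : 0 < w (2 * k) := by
      cases k with
      | zero => simpa [hw0] using hξ
      | succ k => linarith [hw1 (2 * k + 1), show w (2 * (k + 1)) = w (2 * k + 1 + 1) from rfl]
    have := mul_pos this h1
    linarith
  · intro k
    linarith [(key k).1]

namespace SailData
variable {ξ : ℝ} {X Y P Q A B : ℕ → ℤ}

theorem signs (h : SailData ξ X Y P Q A B) (k : ℕ) :
    1 ≤ X k ∧ 0 ≤ Y k ∧ 0 ≤ P k ∧ 1 ≤ Q k := by
  induction k with
  | zero => simp [h.X0, h.Y0, h.P0, h.Q0]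
  | succ k ih =>
    obtain ⟨h1, h2, h3, h4⟩ := ih
    have hA := h.A0 k
    have hB := h.B1 k
    have x1 : 1 ≤ X (k + 1) := by rw [h.hX]; nlinarith
    have y1 : 0 ≤ Y (k + 1) := by rw [h.hY]; nlinarith
    refine ⟨x1, y1, ?_, ?_⟩
    · rw [h.hP]; nlinarith
    · rw [h.hQ]; nlinarith

theorem det (h : SailData ξ X Y P Q A B) (k : ℕ) : Q k * X k - P k * Y k = 1 := by
  induction k with
  | zero => simp [h.X0, h.Y0, h.P0, h.Q0]
  | succ k ih =>
    rw [h.hP, h.hQ, h.hX, h.hY]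
    linear_combination ih

theorem pos (h : SailData ξ X Y P Q A B) (k : ℕ) (x y : ℤ) (hx : 0 < x)
    (hy : (y : ℝ) < ξ * x) : 1 ≤ Q k * x - P k * y := by
  have hs := (h.signs k).2.2.1
  have hu := h.up k
  have hs' : (0 : ℝ) ≤ P k := by exact_mod_cast hs
  have hx' : (0 : ℝ) < x := by exact_mod_cast hx
  have : (0 : ℝ) < Q k * x - P k * y := by nlinarith
  have : 0 < Q k * x - P k * y := by exact_mod_cast this
  linarith

theorem support (h : SailData ξ X Y P Q A B) (k : ℕ) (x y : ℤ) (hx : 0 < x)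
    (hy : (y : ℝ) < ξ * x) : (x = X (k + 1) ∧ y = Y (k + 1)) ∨
      (Q k + Q (k + 1)) * X (k + 1) - (P k + P (k + 1)) * Y (k + 1)
        < (Q k + Q (k + 1)) * x - (P k + P (k + 1)) * y := by
  have h1 := h.pos k x y hx hy
  have h2 := h.pos (k + 1) x y hx hy
  have d1 : Q k * X (k + 1) - P k * Y (k + 1) = 1 := by
    rw [h.hX, h.hY]; linear_combination h.det k
  have d2 := h.det (k + 1)
  by_cases hc : Q k * x - P k * y = 1 ∧ Q (k + 1) * x - P (k + 1) * y = 1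
  · left
    obtain ⟨c1, c2⟩ := hc
    have hB : B k ≠ 0 := by have := h.B1 k; omega
    rw [h.hP, h.hQ] at c2 d2
    have c3 : Y (k + 1) * x - X (k + 1) * y = 0 := by
      apply mul_left_cancel₀ hB
      linear_combination c2 - c1
    constructor
    · linear_combination (-x) * d1 + X (k + 1) * c1 - P k * c3
    · linear_combination (-y) * d1 + Y (k + 1) * c1 - Q k * c3
  · right
    by_contra hlt
    apply hc
    constructor <;> nlinarith

theorem nonext (h : SailData ξ X Y P Q A B) (x y : ℤ) (hx : 0 < x) (hy0 : 0 ≤ y)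
    (hy : (y : ℝ) < ξ * x) : (∃ k, x = X k ∧ y = Y k) ∨
      ∃ z t : ℤ, (z ≠ 0 ∨ t ≠ 0) ∧
        (0 < x + z ∧ 0 ≤ y + t ∧ ((y + t : ℤ) : ℝ) < ξ * (x + z : ℤ)) ∧
        (0 < x - z ∧ 0 ≤ y - t ∧ ((y - t : ℤ) : ℝ) < ξ * (x - z : ℤ)) := by
  -- find the cone containing the point
  have hdec : ∀ k, X (k + 1) * y - Y (k + 1) * x
      = (X k * y - Y k * x) - A k * (Q k * x - P k * y) := by
    intro k; rw [h.hX, h.hY]; ring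
  have hbound : ∀ k : ℕ, X (k + 1) * y - Y (k + 1) * x ≤ y - k := by
    intro k
    induction k with
    | zero =>
      have := hdec 0
      rw [this, h.X0, h.Y0]
      have := h.pos 0 x y hx hy
      have := h.A0 0
      push_cast
      nlinarith
    | succ k ih =>
      rw [hdec (k + 1)]
      have := h.pos (k + 1) x y hx hy
      have := h.A1 k
      push_cast
      nlinarith
  have hex : ∃ k, X (k + 1) * y - Y (k + 1) * x < 0 := by
    refine ⟨y.toNat + 1, ?_⟩
    have := hbound (y.toNat + 1)
    have : ((y.toNat : ℕ) : ℤ) = y := Int.toNat_of_nonneg hy0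
    push_cast at *
    linarith
  classical
  obtain ⟨k, hk1, hk2⟩ : ∃ k, X (k + 1) * y - Y (k + 1) * x < 0 ∧ 0 ≤ X k * y - Y k * x := by
    refine ⟨Nat.find hex, Nat.find_spec hex, ?_⟩
    rcases hm : Nat.find hex with _ | m
    · simpa [h.X0, h.Y0] using hy0
    · exact not_lt.1 (Nat.find_min hex (by omega : m < Nat.find hex))
  have hs := h.pos k x y hx hy
  have hdk := h.det k
  rw [hdec] at hk1
  obtain ⟨s, hs'⟩ : ∃ s, s = Q k * x - P k * y := ⟨_, rfl⟩
  obtain ⟨t, ht'⟩ : ∃ t, t = X k * y - Y k * x := ⟨_, rfl⟩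
  rw [← hs', ← ht'] at hk1
  rw [← ht'] at hk2
  rw [← hs'] at hs
  have hxe : x = s * X k + t * P k := by
    rw [hs', ht']; linear_combination (-x) * hdk
  have hye : y = s * Y k + t * Q k := by
    rw [hs', ht']; linear_combination (-y) * hdk
  clear hs' ht' hdec hbound hex
  obtain ⟨g1, g2, g3, g4⟩ := h.signs k
  -- all points of the cone are admissible
  have cone : ∀ s' t' : ℤ, 1 ≤ s' → 0 ≤ t' → t' ≤ A k * s' →
      0 < s' * X k + t' * P k ∧ 0 ≤ s' * Y k + t' * Q k ∧
      ((s' * Y k + t' * Q k : ℤ) : ℝ) < ξ * (s' * X k + t' * P k : ℤ) := by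
    intro s' t' h1 h2 h3
    refine ⟨by nlinarith [mul_nonneg h2 g3], by nlinarith [mul_nonneg h2 (by linarith : 0 ≤ Q k), mul_nonneg (by linarith : 0 ≤ s') g2], ?_⟩
    have l1 := h.low k
    have l2 := h.low (k + 1)
    have l3 := h.up k
    rw [h.hX, h.hY] at l2
    have h1' : (1 : ℝ) ≤ s' := by exact_mod_cast h1
    have h3' : (t' : ℝ) ≤ A k * s' := by exact_mod_cast h3
    push_cast at l2 ⊢
    have m1 : 0 ≤ (A k * s' - t') * ((Q k : ℝ) - ξ * P k) :=
      mul_nonneg (by linarith) (by linarith)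
    have m2 : 0 < (s' : ℝ) * (ξ * (X k + A k * P k) - (Y k + A k * Q k)) :=
      mul_pos (by linarith) (by linarith)
    linarith
  rcases eq_or_lt_of_le hs with hs1 | hs1
  · rcases eq_or_lt_of_le hk2 with ht0 | ht0
    · left
      refine ⟨k, ?_, ?_⟩
      · rw [hxe, ← hs1, ← ht0]; ring
      · rw [hye, ← hs1, ← ht0]; ring
    · right
      subst hs1
      refine ⟨P k, Q k, Or.inr (by omega), ?_, ?_⟩
      · have := cone 1 (t + 1) le_rfl (by omega) (by omega)
        rwa [show 1 * X k + (t + 1) * P k = x + P k by rw [hxe]; ring,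
          show 1 * Y k + (t + 1) * Q k = y + Q k by rw [hye]; ring] at this
      · have := cone 1 (t - 1) le_rfl (by omega) (by omega)
        rwa [show 1 * X k + (t - 1) * P k = x - P k by rw [hxe]; ring,
          show 1 * Y k + (t - 1) * Q k = y - Q k by rw [hye]; ring] at this
  · right
    have hA := h.A0 k
    have gen : ∀ j : ℤ, 0 ≤ j → j ≤ A k → j ≤ t → t - j ≤ A k * (s - 1) → 
      ∃ z t : ℤ, (z ≠ 0 ∨ t ≠ 0) ∧
        (0 < x + z ∧ 0 ≤ y + t ∧ ((y + t : ℤ) : ℝ) < ξ * (x + z : ℤ)) ∧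
        (0 < x - z ∧ 0 ≤ y - t ∧ ((y - t : ℤ) : ℝ) < ξ * (x - z : ℤ)) := by
      intro j j0 j1 j2 j3
      refine ⟨X k + j * P k, Y k + j * Q k, Or.inl ?_, ?_, ?_⟩
      · have := mul_nonneg j0 g3
        omega
      · have := cone (s + 1) (t + j) (by omega) (by omega) (by linarith)
        rwa [show (s + 1) * X k + (t + j) * P k = x + (X k + j * P k) by rw [hxe]; ring,
          show (s + 1) * Y k + (t + j) * Q k = y + (Y k + j * Q k) by rw [hye]; ring] at this
      · have := cone (s - 1) (t - j) (by omega) (by omega) (by linarith)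
        rwa [show (s - 1) * X k + (t - j) * P k = x - (X k + j * P k) by rw [hxe]; ring,
          show (s - 1) * Y k + (t - j) * Q k = y - (Y k + j * Q k) by rw [hye]; ring] at this
    by_cases hc : t ≤ A k * (s - 1)
    · exact gen 0 le_rfl hA hk2 (by linarith)
    · exact gen (A k) hA le_rfl (by nlinarith) (by nlinarith)

end SailData

/-- A strictly supported point of `S` is extreme in the hull. -/
theorem extreme_of_support (S : Set (ℝ × ℝ)) (v : ℝ × ℝ) (hv : v ∈ S) (c d : ℝ)
    (hS : ∀ s ∈ S, s = v ∨ c * v.1 + d * v.2 < c * s.1 + d * s.2) :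
    v ∈ Set.extremePoints ℝ (convexHull ℝ S) := by
  have hC : Convex ℝ {s : ℝ × ℝ | s = v ∨ c * v.1 + d * v.2 < c * s.1 + d * s.2} := by
    rw [convex_iff_forall_pos]
    rintro x hx y hy a b ha hb hab
    have hb' : b = 1 - a := by linarith
    by_cases h : x = v ∧ y = v
    · left
      rw [h.1, h.2, ← add_smul, hab, one_smul]
    · right
      simp only [Prod.fst_add, Prod.snd_add, Prod.smul_fst, Prod.smul_snd, smul_eq_mul]
      rcases hx with rfl | hx
      · rcases hy with rfl | hy
        · exact absurd ⟨rfl, rfl⟩ h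
        · subst hb'; nlinarith
      · rcases hy with rfl | hy
        · subst hb'; nlinarith
        · subst hb'; nlinarith [mul_pos ha (sub_pos.2 hx), mul_pos hb (sub_pos.2 hy)]
  have hsub := convexHull_min (s := S) (fun s hs => hS s hs) hC
  rw [mem_extremePoints]
  refine ⟨subset_convexHull ℝ S hv, ?_⟩
  intro x hx y hy hxy
  obtain ⟨a, b, ha, hb, hab, rfl⟩ := hxy
  have hb' : b = 1 - a := by linarith
  have h1 := hsub hx
  have h2 := hsub hy
  simp only [Prod.fst_add, Prod.snd_add, Prod.smul_fst, Prod.smul_snd,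
    smul_eq_mul] at h1 h2
  have key : ∀ z : ℝ × ℝ, z = a • x + b • y → c * z.1 + d * z.2
      = a * (c * x.1 + d * x.2) + b * (c * y.1 + d * y.2) := by
    rintro z rfl
    simp only [Prod.fst_add, Prod.snd_add, Prod.smul_fst, Prod.smul_snd, smul_eq_mul]
    ring
  rcases h1 with h1 | h1
  · refine ⟨h1, ?_⟩
    rcases h2 with h2 | h2
    · exact h2
    · exfalso
      have := key x h1
      subst hb'
      nlinarith
  · exfalso
    rcases h2 with h2 | h2
    · have := key y h2
      subst hb'
      nlinarith
    · subst hb'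
      nlinarith [mul_pos ha (sub_pos.2 h1), mul_pos hb (sub_pos.2 h2)]

theorem not_extreme_of_sym (S : Set (ℝ × ℝ)) (v w : ℝ × ℝ) (hw : w ≠ 0) (h1 : v + w ∈ S)
    (h2 : v - w ∈ S) : v ∉ Set.extremePoints ℝ (convexHull ℝ S) := by
  intro hv
  rw [mem_extremePoints] at hv
  have := (hv.2 _ (subset_convexHull ℝ S h1) _ (subset_convexHull ℝ S h2)
    ⟨1 / 2, 1 / 2, by norm_num, by norm_num, by norm_num, by
      ext <;> simp <;> ring⟩).1
  exact hw (by simpa using this)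

/-- Sail vertices of an angle between two lines in normal position: for irrational `α > 1`
and `−1 < β < 0`, with `α = [a₀; a₁, …]` (convergents `pₖ/qₖ`) and `−β = [0; b₁, b₂, …]`
(convergents `p̃ₖ/q̃ₖ`), the extreme points of the convex hull of
`S = {(x, y) ∈ ℤ² : x > 0, βx < y < αx}` are exactly
`{(q₂ₖ, p₂ₖ) : k ≥ 0} ∪ {(q̃₂ₖ, −p̃₂ₖ) : k ≥ 0}`. -/
theorem sail_vertices_of_pair_of_lines (α β : ℝ) (hα : 1 < α)
    (hβ₁ : -1 < β) (hβ₂ : β < 0) (hirrα : Irrational α) (hirrβ : Irrational β)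
    (a p q : ℕ → ℤ) (hcfa : IsCFExpansion α a) (hconva : IsConvergents a p q)
    (b pt qt : ℕ → ℤ) (hcfb : IsCFExpansion (-β) b) (hconvb : IsConvergents b pt qt) :
    Set.extremePoints ℝ (convexHull ℝ {v : ℝ × ℝ | ∃ x y : ℤ,
        v = ((x : ℝ), (y : ℝ)) ∧ 0 < x ∧ β * (x : ℝ) < (y : ℝ) ∧ (y : ℝ) < α * (x : ℝ)}) =
      {v : ℝ × ℝ | ∃ k : ℕ, v = ((q (2 * k) : ℝ), (p (2 * k) : ℝ))} ∪
        {v : ℝ × ℝ | ∃ k : ℕ, v = ((qt (2 * k) : ℝ), (-(pt (2 * k)) : ℝ))} := by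
  obtain ⟨X, Y, P, Q, A, B, hD, hXq, hYp⟩ :=
    sailData_of_cf α (by linarith) hirrα a p q hcfa hconva
  obtain ⟨X', Y', P', Q', A', B', hD', hXq', hYp'⟩ :=
    sailData_of_cf (-β) (by linarith) hirrβ.neg b pt qt hcfb hconvb
  have hb0 : pt 0 = 0 := by
    obtain ⟨w, hw0, hw⟩ := hcfb
    rw [hconvb.1, (hw 0).1, hw0, Int.floor_eq_zero_iff]
    constructor <;> linarith
  have hq0 : qt 0 = 1 := hconvb.2.1
  have h10 : ((1 : ℝ), (0 : ℝ)) ∈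
      {v : ℝ × ℝ | ∃ k : ℕ, v = ((qt (2 * k) : ℝ), (-(pt (2 * k)) : ℝ))} := by
    refine ⟨0, ?_⟩
    simp [hb0, hq0]
  apply Set.Subset.antisymm
  · intro v hv
    obtain ⟨x, y, rfl, hx, hy1, hy2⟩ := extremePoints_convexHull_subset hv
    have hx' : (0 : ℝ) < x := by exact_mod_cast hx
    rcases le_total 0 y with hy | hy
    · rcases hD.nonext x y hx hy hy2 with ⟨k, h1, h2⟩ | ⟨z, t, hz, ⟨u1, u2, u3⟩, ⟨v1, v2, v3⟩⟩
      · cases k with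
        | zero =>
          right
          rw [h1, h2, hD.X0, hD.Y0]
          simpa using h10
        | succ k =>
          left
          exact ⟨k, by rw [h1, h2, hXq, hYp]⟩
      · exfalso
        refine not_extreme_of_sym _ _ ((z : ℝ), (t : ℝ)) ?_ ?_ ?_ hv
        · intro h0
          simp only [Prod.mk_eq_zero, Int.cast_eq_zero] at h0
          rcases hz with hz | hz
          · exact hz h0.1
          · exact hz h0.2
        · refine ⟨x + z, y + t, by simp, u1, ?_, u3⟩
          have e1 : (0 : ℝ) < (x + z : ℤ) := by exact_mod_cast u1
          have e2 : (0 : ℝ) ≤ (y + t : ℤ) := by exact_mod_cast u2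
          nlinarith
        · refine ⟨x - z, y - t, by simp, v1, ?_, v3⟩
          have e1 : (0 : ℝ) < (x - z : ℤ) := by exact_mod_cast v1
          have e2 : (0 : ℝ) ≤ (y - t : ℤ) := by exact_mod_cast v2
          nlinarith
    · right
      rcases hD'.nonext x (-y) hx (by omega) (by push_cast; linarith) with
        ⟨k, h1, h2⟩ | ⟨z, t, hz, ⟨u1, u2, u3⟩, ⟨v1, v2, v3⟩⟩
      · have h2' : y = - Y' k := by omega
        cases k with
        | zero =>
          rw [h1, h2', hD'.X0, hD'.Y0]
          simpa using h10
        | succ k =>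
          exact ⟨k, by rw [h1, h2', hXq', hYp']; push_cast; rfl⟩
      · exfalso
        refine not_extreme_of_sym _ _ ((z : ℝ), ((-t : ℤ) : ℝ)) ?_ ?_ ?_ hv
        · intro h0
          simp only [Prod.mk_eq_zero, Int.cast_eq_zero] at h0
          rcases hz with hz | hz
          · exact hz h0.1
          · exact hz (by omega)
        · have e1 : (0 : ℝ) < (x + z : ℤ) := by exact_mod_cast u1
          have e2 : (0 : ℝ) ≤ (-y + t : ℤ) := by exact_mod_cast u2
          push_cast at u3 e1 e2
          refine ⟨x + z, y - t, by simp [sub_eq_add_neg], u1, ?_, ?_⟩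
          · push_cast; linarith
          · push_cast; nlinarith
        · have e1 : (0 : ℝ) < (x - z : ℤ) := by exact_mod_cast v1
          have e2 : (0 : ℝ) ≤ (-y - t : ℤ) := by exact_mod_cast v2
          push_cast at v3 e1 e2
          refine ⟨x - z, y + t, by simp, v1, ?_, ?_⟩
          · push_cast; linarith
          · push_cast; nlinarith
  · rintro v (⟨k, rfl⟩ | ⟨k, rfl⟩)
    · rw [← hXq, ← hYp]
      obtain ⟨s1, s2, -, -⟩ := hD.signs (k + 1)
      have s1' : (1 : ℝ) ≤ X (k + 1) := by exact_mod_cast s1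
      have s2' : (0 : ℝ) ≤ Y (k + 1) := by exact_mod_cast s2
      refine extreme_of_support _ _ ⟨X (k + 1), Y (k + 1), rfl, by omega, by nlinarith,
        hD.low _⟩ ((Q k + Q (k + 1) : ℤ) : ℝ) (-((P k + P (k + 1) : ℤ) : ℝ)) ?_
      rintro s ⟨x, y, rfl, hx, hy1, hy2⟩
      rcases hD.support k x y hx hy2 with ⟨h1, h2⟩ | h
      · left; rw [h1, h2]
      · right
        have h' := (Int.cast_lt (R := ℝ)).2 h
        push_cast at h' ⊢
        linarith
    · rw [← hXq', ← hYp']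
      obtain ⟨s1, s2, -, -⟩ := hD'.signs (k + 1)
      have s1' : (1 : ℝ) ≤ X' (k + 1) := by exact_mod_cast s1
      have s2' : (0 : ℝ) ≤ Y' (k + 1) := by exact_mod_cast s2
      have hl := hD'.low (k + 1)
      refine extreme_of_support _ _ ⟨X' (k + 1), -Y' (k + 1), by push_cast; rfl, by omega,
        by push_cast; linarith, by push_cast; nlinarith⟩
        ((Q' k + Q' (k + 1) : ℤ) : ℝ) ((P' k + P' (k + 1) : ℤ) : ℝ) ?_
      rintro s ⟨x, y, rfl, hx, hy1, hy2⟩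
      rcases hD'.support k x (-y) hx (by push_cast; linarith) with ⟨h1, h2⟩ | h
      · left
        rw [h1, ← h2]; push_cast; simp
      · right
        have h' := (Int.cast_lt (R := ℝ)).2 h
        push_cast at h' ⊢
        linarith
end

section
/- The LLS sequence of the sail of a pair of lines is the concatenation of the continued fractions of α and −β (Lemma 1 of the paper, in coordinates): let α > 1 and −1 < β < 0 be irrational, with α = [a₀; a₁, a₂, …] (convergents pₖ/qₖ) and −β = [0; b₁, b₂, …] (convergents p̃ₖ/q̃ₖ). Order the sail vertices of the angle {(x, y) : x > 0, βx < y < αx} as the bi-infinite sequence V₋ₖ = (q̃₂ₖ, −p̃₂ₖ) for k ≥ 1, V₀ = (1, 0), Vₖ = (q₂ₖ₋₂, p₂ₖ₋₂) for k ≥ 1. Then: ll(Vₖ₋₁Vₖ) = a₂ₖ₋₂ for all k ≥ 1; lsin∠Vₖ₋₁VₖVₖ₊₁ = a₂ₖ₋₁ for all k ≥ 1; lsin∠V₋ₖ₋₁V₋ₖV₋ₖ₊₁ = b₂ₖ₊₁ for all k ≥ 0; and ll(V₋ₖV₋ₖ₊₁) = b₂ₖ for all k ≥ 1. Hence the LLS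 sequence of this sail is …, b₄, b₃, b₂, b₁, a₀, a₁, a₂, a₃, …. -/
/-- The integer length of the segment `PQ` between two lattice points: the number of lattice
points in the open segment plus one, equivalently the gcd of the coordinates of `Q - P`. -/
def llen (P Q : ℤ × ℤ) : ℕ := Int.gcd (Q.1 - P.1) (Q.2 - P.2)

/-- The determinant of the 2×2 matrix with columns `u` and `v`. -/
def det2 (u v : ℤ × ℤ) : ℤ := u.1 * v.2 - u.2 * v.1

/-- The integer sine of the angle `∠ABC`. -/
noncomputable def lsin (A B C : ℤ × ℤ) : ℚ :=
  (|det2 (A - B) (C - B)| : ℚ) / ((llen A B : ℚ) * (llen B C : ℚ))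

theorem lls_aux_llen (A B : ℤ × ℤ) (m u1 u2 : ℤ) (hm : 0 < m) (hu : IsCoprime u1 u2)
    (h1 : B.1 - A.1 = m * u1) (h2 : B.2 - A.2 = m * u2) : (llen A B : ℤ) = m := by
  unfold llen
  rw [h1, h2, Int.gcd_mul_left, Int.isCoprime_iff_gcd_eq_one.mp hu]
  simp [abs_of_pos hm]

theorem lls_aux_lsin (A B C : ℤ × ℤ) (m n u1 u2 v1 v2 s : ℤ) (hm : 0 < m) (hn : 0 < n)
    (hs : 0 ≤ s) (hu : IsCoprime u1 u2) (hv : IsCoprime v1 v2)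
    (h1 : B.1 - A.1 = m * u1) (h2 : B.2 - A.2 = m * u2)
    (h3 : C.1 - B.1 = n * v1) (h4 : C.2 - B.2 = n * v2)
    (hd : (u1 * v2 - u2 * v1) ^ 2 = s ^ 2) : lsin A B C = (s : ℚ) := by
  have e1 := lls_aux_llen A B m u1 u2 hm hu h1 h2
  have e2 := lls_aux_llen B C n v1 v2 hn hv h3 h4
  have e1' : (llen A B : ℚ) = (m : ℚ) := by exact_mod_cast e1
  have e2' : (llen B C : ℚ) = (n : ℚ) := by exact_mod_cast e2
  have hD : |det2 (A - B) (C - B)| = s * (m * n) := by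
    have : det2 (A - B) (C - B) = -((m * n) * (u1 * v2 - u2 * v1)) := by
      simp only [det2, Prod.fst_sub, Prod.snd_sub, h3, h4]
      rw [show A.1 - B.1 = -(m * u1) by linarith, show A.2 - B.2 = -(m * u2) by linarith]
      ring
    rw [this, abs_neg, abs_mul, abs_of_pos (mul_pos hm hn), (sq_eq_sq_iff_abs_eq_abs _ _).mp hd,
      abs_of_nonneg hs]
    ring
  unfold lsin
  rw [e1', e2']
  have hm' : (m : ℚ) ≠ 0 := by exact_mod_cast hm.ne'
  have hn' : (n : ℚ) ≠ 0 := by exact_mod_cast hn.ne'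
  have hD' : |(det2 (A - B) (C - B) : ℚ)| = s * (m * n) := by exact_mod_cast hD
  rw [hD']
  field_simp

theorem lls_aux_pos (ξ : ℝ) (a : ℕ → ℤ) (hirr : Irrational ξ) (h : IsCFExpansion ξ a) :
    a 0 = ⌊ξ⌋ ∧ ∀ n, 1 ≤ a (n + 1) := by
  obtain ⟨w, h0, hw⟩ := h
  have hi : ∀ n, Irrational (w n) := by
    intro n
    induction n with
    | zero => rwa [h0]
    | succ k ih =>
      rw [(hw k).2, one_div]
      exact (ih.sub_intCast _).inv
  refine ⟨by rw [(hw 0).1, h0], fun n => ?_⟩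
  rw [(hw (n + 1)).1, Int.le_floor, (hw n).2, (hw n).1]
  have h1 : 0 < w n - ⌊w n⌋ := by
    have := Int.floor_le (w n)
    have h2 := (hi n).ne_int ⌊w n⌋
    exact sub_pos.mpr (lt_of_le_of_ne this h2.symm)
  have h3 : w n - ⌊w n⌋ < 1 := by linarith [Int.lt_floor_add_one (w n)]
  rw [le_div_iff₀ h1]
  push_cast
  linarith

theorem lls_aux_det (x y c : ℕ → ℤ) (hx : ∀ n, x (n + 2) = c n * x (n + 1) + x n)
    (hy : ∀ n, y (n + 2) = c n * y (n + 1) + y n)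
    (h0 : (x 0 * y 1 - y 0 * x 1) ^ 2 = 1) (n : ℕ) :
    (x n * y (n + 1) - y n * x (n + 1)) ^ 2 = 1 := by
  induction n with
  | zero => exact h0
  | succ k ih => rw [hx, hy, ← ih]; ring

theorem lls_aux_cop (x y z t : ℤ) (h : (x * t - y * z) ^ 2 = 1) : IsCoprime z t :=
  ⟨-y * (x * t - y * z), x * (x * t - y * z), by linear_combination h⟩

/-- Integer length and sine along every second term of a two-term recurrence. -/
theorem lls_aux_seq (x y c : ℕ → ℤ) (hx : ∀ n, x (n + 2) = c n * x (n + 1) + x n)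
    (hy : ∀ n, y (n + 2) = c n * y (n + 1) + y n)
    (h0 : (x 0 * y 1 - y 0 * x 1) ^ 2 = 1) (n : ℕ) (hc : ∀ i, n ≤ i → 1 ≤ c i) :
    (llen (x n, y n) (x (n + 2), y (n + 2)) : ℤ) = c n ∧
    lsin (x n, y n) (x (n + 2), y (n + 2)) (x (n + 4), y (n + 4)) = (c (n + 1) : ℚ) := by
  have hd := lls_aux_det x y c hx hy h0
  have c1 := lls_aux_cop _ _ _ _ (hd n)
  have c3 := lls_aux_cop _ _ _ _ (hd (n + 2))
  have p0 := hc n le_rfl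
  have p1 := hc (n + 1) (by omega)
  have p2 := hc (n + 2) (by omega)
  have hx2 := hx (n + 2)
  have hy2 := hy (n + 2)
  have hx1 := hx (n + 1)
  have hy1 := hy (n + 1)
  refine ⟨lls_aux_llen _ _ (c n) _ _ (by omega) c1 ?_ ?_,
    lls_aux_lsin _ _ _ (c n) (c (n + 2)) _ _ _ _ _ (by omega) (by omega) (by omega) c1 c3
      ?_ ?_ ?_ ?_ ?_⟩
  · simp [hx]
  · simp [hy]
  · simp [hx n]
  · simp [hy n]
  · simp [hx2]
  · simp [hy2]
  · have e := hd (n + 1)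
    simp only [add_assoc, Nat.reduceAdd] at *
    rw [hx1, hy1]
    linear_combination (c (n + 1)) ^ 2 * e

theorem lls_aux_llen_symm (A B : ℤ × ℤ) : llen A B = llen B A := by
  unfold llen
  rw [← neg_sub A.1, ← neg_sub A.2, Int.neg_gcd, Int.gcd_neg]

theorem lls_aux_lsin_symm (A B C : ℤ × ℤ) : lsin A B C = lsin C B A := by
  have h : det2 (A - B) (C - B) = -det2 (C - B) (A - B) := by unfold det2; ring
  unfold lsin
  rw [h, lls_aux_llen_symm A B, lls_aux_llen_symm C B, mul_comm]
  simp

/-- Lemma 1 of the paper: the LLS sequence of the sail of the pair of lines `y = αx`,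
`y = βx` (with irrational `α > 1` and `−1 < β < 0`) is the concatenation
`…, b₄, b₃, b₂, b₁, a₀, a₁, a₂, a₃, …` of the continued fraction expansions
`α = [a₀; a₁, a₂, …]` and `−β = [0; b₁, b₂, …]`, where the sail vertices are ordered as
`V₋ₖ = (q̃₂ₖ, −p̃₂ₖ)` for `k ≥ 1`, `V₀ = (1, 0)`, `Vₖ = (q₂ₖ₋₂, p₂ₖ₋₂)` for `k ≥ 1`. -/
theorem lls_sequence_of_sail_of_pair_of_lines (α β : ℝ) (hα : 1 < α)
    (hβ₁ : -1 < β) (hβ₂ : β < 0) (hirrα : Irrational α) (hirrβ : Irrational β)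
    (a p q : ℕ → ℤ) (hcfa : IsCFExpansion α a) (hconva : IsConvergents a p q)
    (b pt qt : ℕ → ℤ) (hcfb : IsCFExpansion (-β) b) (hconvb : IsConvergents b pt qt)
    (V : ℤ → ℤ × ℤ) (hV0 : V 0 = (1, 0))
    (hVpos : ∀ k : ℕ, V ((k : ℤ) + 1) = (q (2 * k), p (2 * k)))
    (hVneg : ∀ k : ℕ, V (-((k : ℤ) + 1)) = (qt (2 * (k + 1)), -pt (2 * (k + 1)))) :
    (∀ k : ℕ, ((llen (V (k : ℤ)) (V ((k : ℤ) + 1)) : ℤ) = a (2 * k))) ∧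
      (∀ k : ℕ, lsin (V (k : ℤ)) (V ((k : ℤ) + 1)) (V ((k : ℤ) + 2)) = (a (2 * k + 1) : ℚ)) ∧
      (∀ k : ℕ, lsin (V (-((k : ℤ) + 1))) (V (-(k : ℤ))) (V (-(k : ℤ) + 1)) = (b (2 * k + 1) : ℚ)) ∧
      (∀ k : ℕ, ((llen (V (-((k : ℤ) + 1))) (V (-(k : ℤ))) : ℤ) = b (2 * (k + 1)))) := by
  obtain ⟨a0, apos⟩ := lls_aux_pos α a hirrα hcfa
  obtain ⟨b0, bpos⟩ := lls_aux_pos (-β) b hirrβ.neg hcfb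
  have ha0 : 1 ≤ a 0 := by
    rw [a0, Int.le_floor]; push_cast; exact hα.le
  have hb0 : b 0 = 0 := by
    rw [b0, Int.floor_eq_iff]; push_cast; constructor <;> linarith
  have hapos : ∀ i, 1 ≤ a i := fun i => by
    cases i with
    | zero => exact ha0
    | succ k => exact apos k
  obtain ⟨hp0, hq0, hp1, hq1, hpq⟩ := hconva
  obtain ⟨hs0, ht0, hs1, ht1, hst⟩ := hconvb
  -- shifted sequences for `α`
  let x : ℕ → ℤ := fun n => match n with
    | 0 => 1
    | 1 => 0
    | k + 2 => q k
  let y : ℕ → ℤ := fun n => match n with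
    | 0 => 0
    | 1 => 1
    | k + 2 => p k
  have hx : ∀ n, x (n + 2) = a n * x (n + 1) + x n := by
    intro n
    match n with
    | 0 => simp [x, hq0]
    | 1 => simp [x, hq0, hq1]
    | k + 2 => exact (hpq k).2
  have hy : ∀ n, y (n + 2) = a n * y (n + 1) + y n := by
    intro n
    match n with
    | 0 => simp [y, hp0]
    | 1 => simp [y, hp0, hp1]
    | k + 2 => exact (hpq k).1
  have hVx : ∀ k : ℕ, V (k : ℤ) = (x (2 * k), y (2 * k)) := by
    intro k
    cases k with
    | zero => simpa [x, y] using hV0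
    | succ j => push_cast; rw [hVpos]; rfl
  have hA : ∀ k : ℕ, _ := fun k =>
    lls_aux_seq x y a hx hy (by simp [x, y]) (2 * k) (fun i _ => hapos i)
  -- shifted sequences for `-β`, reflected
  let z : ℕ → ℤ := fun n => match n with
    | 0 => 0
    | k + 1 => qt k
  let t : ℕ → ℤ := fun n => match n with
    | 0 => -1
    | k + 1 => -pt k
  have hz : ∀ n, z (n + 2) = b (n + 1) * z (n + 1) + z n := by
    intro n
    match n with
    | 0 => simp [z, ht0, ht1]
    | k + 1 => exact (hst k).2
  have ht : ∀ n, t (n + 2) = b (n + 1) * t (n + 1) + t n := by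
    intro n
    match n with
    | 0 => simp [t, hs0, hs1, hb0]
    | k + 1 => simp only [t]; rw [(hst k).1]; ring
  have hVz : ∀ k : ℕ, V (-(k : ℤ)) = (z (2 * k + 1), t (2 * k + 1)) := by
    intro k
    cases k with
    | zero => simpa [z, t, ht0, hs0, hb0] using hV0
    | succ j => push_cast; rw [hVneg]
  have hB : ∀ k : ℕ, _ := fun k =>
    lls_aux_seq z t (fun n => b (n + 1)) hz ht (by simp [z, t, ht0])
      (2 * k + 1) (fun i _ => bpos i)
  have hVz1 : ∀ k : ℕ, V (-((k : ℤ) + 1)) = (z (2 * k + 1 + 2), t (2 * k + 1 + 2)) := by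
    intro k
    have := hVz (k + 1)
    push_cast at this
    rw [this]; rfl
  refine ⟨fun k => ?_, fun k => ?_, fun k => ?_, fun k => ?_⟩
  · have h := (hA k).1
    have h1 := hVx (k + 1)
    push_cast at h1
    rw [hVx, h1]; exact h
  · have h := (hA k).2
    have h1 := hVx (k + 1)
    have h2 := hVx (k + 2)
    push_cast at h1 h2
    rw [hVx, h1, h2]; exact h
  · cases k with
    | zero =>
      have v1 : V 1 = (1, a 0) := by simpa [hq0, hp0] using hVpos 0
      have v2 : V (-1) = (b 2 * b 1 + 1, -b 2) := by
        have := hVneg 0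
        simpa [hst, hs0, ht0, hs1, ht1, hb0] using this
      have b1 := bpos 0
      have b2 := bpos 1
      norm_num at b1 b2
      simp only [Nat.cast_zero, zero_add, neg_zero, mul_zero]
      rw [v1, v2, hV0]
      refine lls_aux_lsin _ _ _ (b 2) (a 0) (-b 1) 1 0 1 (b 1) (by omega) (by omega) (by omega)
        isCoprime_one_right isCoprime_one_right ?_ ?_ ?_ ?_ ?_ <;> simp
    | succ j =>
      have h := (hB j).2
      have h1 := hVz j
      have h2 := hVz1 j
      have h3 := hVz1 (j + 1)
      rw [lls_aux_lsin_symm]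
      push_cast at h3 ⊢
      rw [h3, h2, show (-((j : ℤ) + 1) + 1) = -(j : ℤ) by ring, h1]
      exact h
  · have h := (hB k).1
    rw [lls_aux_llen_symm, hVz1, hVz]
    exact h
end
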